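/- Let u be a weak solution of −div(A∇u) = u in Ω and let δ ∈ (0,1). Suppose there exist C₂ > 0 and R₂ > 1 such that G(ρ) ≥ C₂ ρ^{n−1−δ} for all ρ ≥ R₂. Then there exist C₄ > 0 and R₃ ≥ R₂ such that ∫_{∂B_ρ} (Zu/r)² μ dσ + ∫_{∂B_ρ} u² dσ ≥ C₄ ρ^{−δ} for all ρ ≥ R₃. -/

import Mathlib

open MeasureTheory Metric Filter

noncomputable section

abbrev En (n : ℕ) := EuclideanSpace ℝ (Fin n)

/-- The exterior domain `Ω = {x ∈ ℝⁿ : |x| > 1}`. -/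
def OmegaExt (n : ℕ) : Set (En n) := {x | 1 < ‖x‖}

/-- The quadratic/bilinear form `⟨M ξ, η⟩`. -/
def quadForm {n : ℕ} (M : Matrix (Fin n) (Fin n) ℝ) (ξ η : En n) : ℝ :=
  ∑ i, M.mulVec (fun j => ξ j) i * η i

/-- The conformal factor `μ(x) = ⟨A(x)∇r, ∇r⟩ = ⟨A(x)x, x⟩ / |x|²`. -/
def muA {n : ℕ} (A : En n → Matrix (Fin n) (Fin n) ℝ) (x : En n) : ℝ :=
  quadForm (A x) x x / ‖x‖ ^ 2

/-- The vector field `Z(x) = r(x) A(x)∇r(x) / μ(x) = A(x)x / μ(x)`. -/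
def Zvec {n : ℕ} (A : En n → Matrix (Fin n) (Fin n) ℝ) (x : En n) : En n :=
  (muA A x)⁻¹ • (WithLp.toLp 2 ((A x).mulVec (fun j => x j)) : En n)

/-- The derivative of `f` along `Z`: `Zf = ⟨Z, ∇f⟩`. -/
def Zd {n : ℕ} (A : En n → Matrix (Fin n) (Fin n) ℝ) (f : En n → ℝ) (x : En n) : ℝ :=
  ∑ i, Zvec A x i * gradient f x i

/-- Surface integral over the sphere `{|x| = ρ}` w.r.t. the `(n-1)`-dimensional
Hausdorff measure. -/
def sphInt (n : ℕ) (ρ : ℝ) (f : En n → ℝ) : ℝ :=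
  ∫ x in sphere (0 : En n) ρ, f x ∂(μH[(n : ℝ) - 1])

/-- Structural hypotheses on `A`: symmetry, `C¹` entries on `Ω`, uniform ellipticity
`λ|ξ|² ≤ ⟨A(x)ξ,ξ⟩ ≤ λ⁻¹|ξ|²`, and the decay `|x||∇B(x)| + |B(x)| ≤ C|x|^{-α}`
where `B = A - Iₙ` (entrywise). -/
def EllipticDecay {n : ℕ} (A : En n → Matrix (Fin n) (Fin n) ℝ) (lam α C : ℝ) : Prop :=
  (∀ x ∈ OmegaExt n, (A x).IsSymm) ∧
  (∀ i j, ContDiffOn ℝ 1 (fun x => A x i j) (OmegaExt n)) ∧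
  (∀ x ∈ OmegaExt n, ∀ ξ : En n,
      lam * ‖ξ‖ ^ 2 ≤ quadForm (A x) ξ ξ ∧ quadForm (A x) ξ ξ ≤ lam⁻¹ * ‖ξ‖ ^ 2) ∧
  (∀ x ∈ OmegaExt n, ∀ i j,
      ‖x‖ * ‖gradient (fun y => (A y - 1) i j) x‖ + |(A x - 1) i j| ≤ C * ‖x‖ ^ (-α))

/-- `u ∈ C¹(Ω)` is a weak solution of `-div(A∇u) = u` in `Ω`, i.e.
`∫_Ω ⟨A∇u, ∇φ⟩ = ∫_Ω u φ` for every test function `φ ∈ C_c^∞(Ω)`. -/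
def WeakSol {n : ℕ} (A : En n → Matrix (Fin n) (Fin n) ℝ) (u : En n → ℝ) : Prop :=
  ContDiffOn ℝ 1 u (OmegaExt n) ∧
  ∀ φ : En n → ℝ, ContDiff ℝ (⊤ : ℕ∞) φ → HasCompactSupport φ → tsupport φ ⊆ OmegaExt n →
    (∫ x in OmegaExt n, ∑ i, (A x).mulVec (fun j => gradient u x j) i * gradient φ x i) =
    ∫ x in OmegaExt n, u x * φ x

/-- The functional `G(ρ)` associated with a solution `u`, where `w = r^{(n-1)/2} u`. -/
def Gfun {n : ℕ} (A : En n → Matrix (Fin n) (Fin n) ℝ) (u : En n → ℝ) (ρ : ℝ) : ℝ :=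
  let w : En n → ℝ := fun x => ‖x‖ ^ (((n : ℝ) - 1) / 2) * u x
  2 * sphInt n ρ (fun x => (Zd A w x / ‖x‖) ^ 2 * muA A x)
    - sphInt n ρ (fun x => quadForm (A x) (gradient w x) (gradient w x))
    + sphInt n ρ (fun x => (w x) ^ 2)
    - ((n : ℝ) - 1) * ((n : ℝ) - 3) / 4 * sphInt n ρ (fun x => (w x) ^ 2 / ‖x‖ ^ 2 * muA A x)

/-- The chart of the sphere on a face of the cube. -/
def faceMap (m : ℕ) (ρ : ℝ) (i : Fin (m + 1)) (s : ℝ) (y : Fin m → ℝ) : En (m + 1) :=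
  (ρ / ‖(WithLp.toLp 2 (i.insertNth s y : Fin (m + 1) → ℝ) : En (m + 1))‖) •
    (WithLp.toLp 2 (i.insertNth s y : Fin (m + 1) → ℝ) : En (m + 1))

lemma faceMap_contDiff (m : ℕ) (ρ : ℝ) (i : Fin (m + 1)) (s : ℝ) (hs : s ≠ 0) :
    ContDiff ℝ 1 (faceMap m ρ i s) := by
  have hv : ContDiff ℝ 1 (fun y : Fin m → ℝ =>
      (WithLp.toLp 2 (i.insertNth s y : Fin (m + 1) → ℝ) : En (m + 1))) := by
    rw [contDiff_euclidean]
    intro j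
    refine Fin.succAboveCases i ?_ (fun k => ?_) j
    · simpa using contDiff_const
    · simpa using contDiff_apply ℝ ℝ k
  have hne : ∀ y : Fin m → ℝ,
      (WithLp.toLp 2 (i.insertNth s y : Fin (m + 1) → ℝ) : En (m + 1)) ≠ 0 := by
    intro y h
    have := congrArg (fun v : En (m + 1) => v i) h
    simp at this
    exact hs this
  exact (contDiff_const.div (hv.norm ℝ hne) (fun y => norm_ne_zero_iff.mpr (hne y))).smul hv

lemma sphere_subset_faces (m : ℕ) (ρ : ℝ) (hρ : 0 < ρ) :
    sphere (0 : En (m + 1)) ρ ⊆ ⋃ p : Fin (m + 1) × Bool,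
      faceMap m ρ p.1 (if p.2 then 1 else -1) '' closedBall 0 1 := by
  intro x hx
  rw [mem_sphere_zero_iff_norm] at hx
  obtain ⟨i, hi⟩ := Finite.exists_max (fun i => |x i|)
  have hxi : 0 < |x i| := by
    rcases (abs_nonneg (x i)).lt_or_eq with h | h
    · exact h
    · exfalso
      have : x = 0 := by
        ext j
        have := hi j
        have h2 := abs_nonneg (x j)
        have : |x j| = 0 := by linarith
        simpa using this
      rw [this, norm_zero] at hx
      exact hρ.ne hx
  rw [Set.mem_iUnion]
  refine ⟨(i, decide (0 < x i)), fun j => x (i.succAbove j) / |x i|, ?_, ?_⟩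
  · rw [mem_closedBall_zero_iff, pi_norm_le_iff_of_nonneg zero_le_one]
    intro j
    rw [Real.norm_eq_abs, abs_div, abs_abs, div_le_one hxi]
    exact hi _
  · have hv : (WithLp.toLp 2 (i.insertNth (if decide (0 < x i) then (1:ℝ) else -1)
        (fun j => x (i.succAbove j) / |x i|) : Fin (m + 1) → ℝ) : En (m + 1))
        = |x i|⁻¹ • x := by
      ext j
      refine Fin.succAboveCases i ?_ (fun k => ?_) j
      · simp only [Fin.insertNth_apply_same, PiLp.smul_apply, smul_eq_mul]
        by_cases h : 0 < x i
        · simp [h, abs_of_pos h, h.ne']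
        · have h' : x i < 0 := lt_of_le_of_ne (not_lt.mp h) (abs_pos.mp hxi)
          simp [h, abs_of_neg h', inv_neg, h'.ne]
      · simp [div_eq_inv_mul]
    simp only [faceMap]
    rw [hv, norm_smul, smul_smul, hx, norm_inv, Real.norm_eq_abs, abs_abs]
    have : ρ / (|x i|⁻¹ * ρ) * |x i|⁻¹ = 1 := by field_simp
    rw [this, one_smul]

lemma sphere_hausdorff_lt_top (m : ℕ) (ρ : ℝ) (hρ : 0 < ρ) :
    (μH[(m : ℝ)] : Measure (En (m + 1))) (sphere 0 ρ) < ⊤ := by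
  refine (measure_mono (sphere_subset_faces m ρ hρ)).trans_lt ?_
  refine (measure_iUnion_le _).trans_lt ?_
  rw [tsum_fintype]
  refine ENNReal.sum_lt_top.mpr fun p _ => ?_
  have hs : (if p.2 then (1 : ℝ) else -1) ≠ 0 := by split_ifs <;> norm_num
  obtain ⟨K, hK⟩ := LocallyLipschitzOn.exists_lipschitzOnWith_of_compact
    (isCompact_closedBall (0 : Fin m → ℝ) 1)
    (faceMap_contDiff m ρ p.1 _ hs).locallyLipschitz.locallyLipschitzOn
  refine (hK.hausdorffMeasure_image_le (Nat.cast_nonneg m)).trans_lt ?_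
  have : (μH[(m : ℝ)] : Measure (Fin m → ℝ)) = volume := by
    have := hausdorffMeasure_pi_real (ι := Fin m)
    simpa using this
  rw [this]
  exact ENNReal.mul_lt_top (by finiteness) (isCompact_closedBall _ _).measure_lt_top

lemma integrable_sphere (n : ℕ) (hn : 2 ≤ n) (ρ : ℝ) (hρ : 0 < ρ) (f : En n → ℝ)
    (hf : ContinuousOn f (sphere 0 ρ)) :
    Integrable f ((μH[(n : ℝ) - 1] : Measure (En n)).restrict (sphere 0 ρ)) := by
  obtain ⟨m, rfl⟩ : ∃ m, n = m + 1 := ⟨n - 1, by omega⟩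
  have h := sphere_hausdorff_lt_top m ρ hρ
  have e : ((m + 1 : ℕ) : ℝ) - 1 = m := by push_cast; ring
  rw [e]
  have : IsFiniteMeasure ((μH[(m : ℝ)] : Measure (En (m+1))).restrict (sphere 0 ρ)) :=
    ⟨by simpa using h⟩
  have := hf.integrableOn_compact (μ := (μH[(m : ℝ)] : Measure (En (m+1))).restrict (sphere 0 ρ))
    (isCompact_sphere _ _)
  rwa [IntegrableOn, Measure.restrict_restrict (isClosed_sphere.measurableSet),
    Set.inter_self] at this

lemma quadForm_eq {n : ℕ} (M : Matrix (Fin n) (Fin n) ℝ) (ξ η : En n) :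
    quadForm M ξ η = ∑ i, ∑ j, M i j * ξ j * η i := by
  simp [quadForm, Matrix.mulVec, dotProduct, Finset.sum_mul]

lemma quadForm_symm {n : ℕ} (M : Matrix (Fin n) (Fin n) ℝ) (hM : M.IsSymm) (ξ η : En n) :
    quadForm M ξ η = quadForm M η ξ := by
  rw [quadForm_eq, quadForm_eq, Finset.sum_comm]
  refine Finset.sum_congr rfl fun i _ => Finset.sum_congr rfl fun j _ => ?_
  rw [hM.apply]; ring

lemma quadForm_comb {n : ℕ} (M : Matrix (Fin n) (Fin n) ℝ) (hM : M.IsSymm) (a b : ℝ) (ξ η : En n) :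
    quadForm M (a • ξ + b • η) (a • ξ + b • η) =
      a ^ 2 * quadForm M ξ ξ + 2 * a * b * quadForm M ξ η + b ^ 2 * quadForm M η η := by
  have h : 2 * a * b * quadForm M ξ η = a * b * quadForm M ξ η + a * b * quadForm M η ξ := by
    rw [quadForm_symm M hM η ξ]; ring
  rw [h]
  simp only [quadForm_eq, Finset.mul_sum, ← Finset.sum_add_distrib]
  refine Finset.sum_congr rfl fun i _ => Finset.sum_congr rfl fun j _ => ?_
  simp; ring

lemma quadForm_cs {n : ℕ} (M : Matrix (Fin n) (Fin n) ℝ) (hM : M.IsSymm)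
    (hpos : ∀ ξ, 0 ≤ quadForm M ξ ξ) (ξ η : En n) (hξ : 0 < quadForm M ξ ξ) :
    (quadForm M ξ η) ^ 2 ≤ quadForm M ξ ξ * quadForm M η η := by
  have := hpos ((-quadForm M ξ η) • ξ + (quadForm M ξ ξ) • η)
  rw [quadForm_comb M hM] at this
  have h2 : 0 ≤ quadForm M ξ ξ * (quadForm M ξ ξ * quadForm M η η - quadForm M ξ η ^ 2) := by
    linarith
  have := nonneg_of_mul_nonneg_right h2 hξ
  linarith

lemma Zd_eq_quad {n : ℕ} (A : En n → Matrix (Fin n) (Fin n) ℝ) (f : En n → ℝ) (x : En n) :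
    Zd A f x = (muA A x)⁻¹ * quadForm (A x) x (gradient f x) := by
  simp [Zd, Zvec, quadForm, Finset.mul_sum, mul_assoc]

lemma Zd_eq_fderiv {n : ℕ} (A : En n → Matrix (Fin n) (Fin n) ℝ) (f : En n → ℝ) (x : En n) :
    Zd A f x = fderiv ℝ f x (Zvec A x) := by
  rw [← inner_gradient_left, PiLp.inner_apply]
  simp [Zd]

lemma inner_Zvec {n : ℕ} (A : En n → Matrix (Fin n) (Fin n) ℝ) (x : En n) (hx : x ≠ 0)
    (hμ : muA A x ≠ 0) : inner ℝ x (Zvec A x) = ‖x‖ ^ 2 := by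
  have h : inner ℝ x (Zvec A x) = (muA A x)⁻¹ * quadForm (A x) x x := by
    simp [Zvec, quadForm, PiLp.inner_apply, Finset.mul_sum, mul_assoc]
  have hx' : ‖x‖ ≠ 0 := norm_ne_zero_iff.mpr hx
  have h2 : quadForm (A x) x x = muA A x * ‖x‖ ^ 2 := by
    rw [muA]; field_simp
  rw [h, h2]; field_simp

lemma Zd_mul_rpow {n : ℕ} (A : En n → Matrix (Fin n) (Fin n) ℝ) (u : En n → ℝ) (k : ℝ)
    (x : En n) (hx : x ≠ 0) (hμ : muA A x ≠ 0) (hu : DifferentiableAt ℝ u x) :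
    Zd A (fun y => ‖y‖ ^ k * u y) x = ‖x‖ ^ k * (Zd A u x + k * u x) := by
  have hx' : 0 < ‖x‖ := norm_pos_iff.mpr hx
  have h1 : HasFDerivAt (fun y : En n => ‖y‖ ^ 2) (2 • innerSL ℝ x) x :=
    (hasStrictFDerivAt_norm_sq x).hasFDerivAt
  have h2 := h1.rpow_const (p := k / 2) (Or.inl (by positivity))
  have h3 : (fun y : En n => (‖y‖ ^ 2) ^ (k / 2)) = fun y => ‖y‖ ^ k := by
    ext y
    rw [← Real.rpow_natCast, ← Real.rpow_mul (norm_nonneg _)]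
    congr 1; push_cast; ring
  rw [h3] at h2
  have h5 : HasFDerivAt (fun y => ‖y‖ ^ k * u y) _ x := h2.mul hu.hasFDerivAt
  rw [Zd_eq_fderiv, h5.fderiv, Zd_eq_fderiv]
  simp only [add_apply, smul_apply, smul_eq_mul,
    innerSL_apply_apply, inner_Zvec A x hx hμ, nsmul_eq_mul]
  have h4 : (‖x‖ ^ 2) ^ (k / 2 - 1) * ‖x‖ ^ 2 = ‖x‖ ^ k := by
    rw [← Real.rpow_add_one (by positivity), ← Real.rpow_natCast, ← Real.rpow_mul (norm_nonneg _)]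
    congr 1; push_cast; ring
  rw [← h4]; push_cast; ring

lemma isOpen_OmegaExt (n : ℕ) : IsOpen (OmegaExt n) := isOpen_lt continuous_const continuous_norm

lemma gradient_continuousOn {n : ℕ} (f : En n → ℝ) (hf : ContDiffOn ℝ 1 f (OmegaExt n)) :
    ContinuousOn (gradient f) (OmegaExt n) := by
  have := hf.continuousOn_fderiv_of_isOpen (isOpen_OmegaExt n) le_rfl
  exact (LinearIsometryEquiv.continuous _).comp_continuousOn this

lemma quadForm_continuousOn {n : ℕ} (A : En n → Matrix (Fin n) (Fin n) ℝ) (f g : En n → En n)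
    (s : Set (En n))
    (hA : ∀ i j, ContinuousOn (fun x => A x i j) s) (hf : ContinuousOn f s)
    (hg : ContinuousOn g s) : ContinuousOn (fun x => quadForm (A x) (f x) (g x)) s := by
  simp only [quadForm_eq]
  refine continuousOn_finsetSum _ fun i _ => continuousOn_finsetSum _ fun j _ => ?_
  have e : ∀ i, Continuous (fun x : En n => x i) := fun i => by fun_prop
  exact ((hA i j).mul ((e j).comp_continuousOn hf)).mul ((e i).comp_continuousOn hg)

lemma pointwise_alg (T z v m ρ k c l Q : ℝ) (hρ1 : 1 < ρ) (hm0 : 0 < m) (hm1 : m ≤ l)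
    (hl : 0 < l) (hcs : (T * (z + k * v) / ρ) ^ 2 * m ≤ Q) :
    2 * ((T * (z + k * v) / ρ) ^ 2 * m) - Q + (T * v) ^ 2 - c * ((T * v) ^ 2 / ρ ^ 2 * m) ≤
      T ^ 2 * (3 + 2 * k ^ 2 * l + |c| * l) * ((z / ρ) ^ 2 * m + v ^ 2) := by
  have hρ0 : 0 < ρ := by linarith
  have hρi : (1 / ρ) ^ 2 ≤ 1 := by
    rw [div_pow, one_pow, div_le_one (by positivity)]
    exact one_le_pow₀ hρ1.le
  have hmv : m * (v / ρ) ^ 2 ≤ l * v ^ 2 := by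
    have : (v / ρ) ^ 2 ≤ v ^ 2 := by
      have : (v / ρ) ^ 2 = (1 / ρ) ^ 2 * v ^ 2 := by ring
      rw [this]; exact mul_le_of_le_one_left (sq_nonneg v) hρi
    exact mul_le_mul hm1 this (sq_nonneg _) hl.le
  have hmv0 : 0 ≤ m * (v / ρ) ^ 2 := by positivity
  have b1 : (T * (z + k * v) / ρ) ^ 2 * m ≤
      T ^ 2 * (2 * ((z / ρ) ^ 2 * m) + 2 * k ^ 2 * (l * v ^ 2)) := by
    have e : (T * (z + k * v) / ρ) ^ 2 * m = T ^ 2 * ((z / ρ + k * (v / ρ)) ^ 2 * m) := by ring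
    rw [e]
    refine mul_le_mul_of_nonneg_left ?_ (sq_nonneg T)
    have e1 : (z / ρ + k * (v / ρ)) ^ 2 ≤ 2 * (z / ρ) ^ 2 + 2 * (k * (v / ρ)) ^ 2 := by
      linarith [sq_nonneg (z / ρ - k * (v / ρ))]
    have e2 := mul_le_mul_of_nonneg_right e1 hm0.le
    have e3 := mul_le_mul_of_nonneg_left hmv (by positivity : 0 ≤ 2 * k ^ 2)
    linarith
  have b2 : -(c * ((T * v) ^ 2 / ρ ^ 2 * m)) ≤ T ^ 2 * (|c| * (l * v ^ 2)) := by
    have e : -(c * ((T * v) ^ 2 / ρ ^ 2 * m)) = T ^ 2 * ((-c) * (m * (v / ρ) ^ 2)) := by ring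
    rw [e]
    refine mul_le_mul_of_nonneg_left ?_ (sq_nonneg T)
    exact (mul_le_mul_of_nonneg_right (neg_le_abs c) hmv0).trans
      (mul_le_mul_of_nonneg_left hmv (abs_nonneg c))
  have hP : 0 ≤ T ^ 2 * ((z / ρ) ^ 2 * m) := by positivity
  have hV : 0 ≤ T ^ 2 * v ^ 2 := by positivity
  have hKP : 0 ≤ (1 + 2 * k ^ 2 * l + |c| * l) * (T ^ 2 * ((z / ρ) ^ 2 * m)) := by
    positivity
  have b3 : (T * v) ^ 2 = T ^ 2 * v ^ 2 := by ring
  rw [b3] at b2 ⊢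
  linarith

/-- **estimate `c4`.** If `G(ρ) ≥ C₂ ρ^{n-1-δ}` for all `ρ ≥ R₂`, then
there are `C₄ > 0` and `R₃ ≥ R₂` with
`∫_{∂B_ρ} (Zu/r)² μ + ∫_{∂B_ρ} u² ≥ C₄ ρ^{-δ}` for all `ρ ≥ R₃`. -/
theorem sphere_lower_bound
    (n : ℕ) (hn : 2 ≤ n)
    (A : En n → Matrix (Fin n) (Fin n) ℝ) (lam α C : ℝ)
    (hlam0 : 0 < lam) (hlam1 : lam < 1) (hα : 0 < α) (hC : 0 < C)
    (hA : EllipticDecay A lam α C)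
    (u : En n → ℝ) (hu : WeakSol A u)
    (δ : ℝ) (hδ : δ ∈ Set.Ioo (0 : ℝ) 1)
    (C₂ R₂ : ℝ) (hC₂ : 0 < C₂) (hR₂ : 1 < R₂)
    (hG : ∀ ρ ≥ R₂, C₂ * ρ ^ ((n : ℝ) - 1 - δ) ≤ Gfun A u ρ) :
    ∃ C₄ > (0 : ℝ), ∃ R₃ ≥ R₂, ∀ ρ ≥ R₃,
      C₄ * ρ ^ (-δ) ≤ sphInt n ρ (fun x => (Zd A u x / ‖x‖) ^ 2 * muA A x)
          + sphInt n ρ (fun x => (u x) ^ 2) := by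
  obtain ⟨hsym, hAc, hell, -⟩ := hA
  have huc := hu.1
  clear hu
  have hnR : (2 : ℝ) ≤ n := by exact_mod_cast hn
  set k : ℝ := ((n : ℝ) - 1) / 2 with hk
  set c : ℝ := ((n : ℝ) - 1) * ((n : ℝ) - 3) / 4 with hc
  set w : En n → ℝ := fun x => ‖x‖ ^ k * u x with hw
  have hne : ∀ x ∈ OmegaExt n, x ≠ 0 := fun x hx h => by
    simp only [OmegaExt, Set.mem_ofPred_eq, h, norm_zero] at hx; linarith
  have hwc : ContDiffOn ℝ 1 w (OmegaExt n) := by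
    refine ContDiffOn.mul ?_ huc
    exact (contDiffOn_id.norm ℝ hne).rpow_const_of_ne
      (fun x hx => norm_ne_zero_iff.mpr (hne x hx))
  have hAcont : ∀ i j, ContinuousOn (fun x => A x i j) (OmegaExt n) :=
    fun i j => (hAc i j).continuousOn
  have hμlow : ∀ x ∈ OmegaExt n, lam ≤ muA A x := fun x hx => by
    have : 0 < ‖x‖ := norm_pos_iff.mpr (hne x hx)
    rw [muA, le_div_iff₀ (by positivity)]; exact (hell x hx x).1
  have hμup : ∀ x ∈ OmegaExt n, muA A x ≤ lam⁻¹ := fun x hx => by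
    have : 0 < ‖x‖ := norm_pos_iff.mpr (hne x hx)
    rw [muA, div_le_iff₀ (by positivity)]; exact (hell x hx x).2
  have hnormne : ∀ x ∈ OmegaExt n, ‖x‖ ≠ 0 := fun x hx => norm_ne_zero_iff.mpr (hne x hx)
  have hμc : ContinuousOn (muA A) (OmegaExt n) := by
    refine (quadForm_continuousOn A id id _ hAcont continuousOn_id continuousOn_id).div
      (by fun_prop) (fun x hx => pow_ne_zero _ (hnormne x hx))
  have hZc : ∀ f : En n → ℝ, ContDiffOn ℝ 1 f (OmegaExt n) →
      ContinuousOn (fun x => (Zd A f x / ‖x‖) ^ 2 * muA A x) (OmegaExt n) := by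
    intro f hf
    have h1 : ContinuousOn (Zd A f) (OmegaExt n) := by
      have : Zd A f = fun x => (muA A x)⁻¹ * quadForm (A x) (id x) (gradient f x) :=
        funext fun x => Zd_eq_quad A f x
      rw [this]
      refine (hμc.inv₀ fun x hx => ?_).mul
        (quadForm_continuousOn A id _ _ hAcont continuousOn_id (gradient_continuousOn f hf))
      have := hμlow x hx
      linarith
    exact ((h1.div (by fun_prop) hnormne).pow 2).mul hμc
  set K : ℝ := 3 + 2 * k ^ 2 * lam⁻¹ + |c| * lam⁻¹ with hK
  have hlami : 0 < lam⁻¹ := inv_pos.mpr hlam0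
  have hKpos : 0 < K := by positivity
  refine ⟨C₂ / K, by positivity, R₂, le_rfl, fun ρ hρ => ?_⟩
  have hρ1 : 1 < ρ := lt_of_lt_of_le hR₂ hρ
  have hρ0 : 0 < ρ := by linarith
  have hsub : sphere (0 : En n) ρ ⊆ OmegaExt n := fun x hx => by
    rw [mem_sphere_zero_iff_norm] at hx
    simp only [OmegaExt, Set.mem_ofPred_eq, hx]; exact hρ1
  have hint : ∀ f : En n → ℝ, ContinuousOn f (OmegaExt n) →
      Integrable f ((μH[(n : ℝ) - 1] : Measure (En n)).restrict (sphere 0 ρ)) :=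
    fun f hf => integrable_sphere n hn ρ hρ0 f (hf.mono hsub)
  have i1 := hint _ (hZc w hwc)
  have i2 := hint _ (quadForm_continuousOn A _ _ _ hAcont (gradient_continuousOn w hwc)
    (gradient_continuousOn w hwc))
  have i3 := hint (fun x => (w x) ^ 2) (hwc.continuousOn.pow 2)
  have i4 := hint (fun x => (w x) ^ 2 / ‖x‖ ^ 2 * muA A x)
    (((hwc.continuousOn.pow 2).div (by fun_prop)
      (fun x hx => pow_ne_zero _ (hnormne x hx))).mul hμc)
  have i5 := hint _ (hZc u huc)
  have i6 := hint (fun x => (u x) ^ 2) (huc.continuousOn.pow 2)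
  have hGle : Gfun A u ρ ≤ ρ ^ ((n : ℝ) - 1) * K *
      (sphInt n ρ (fun x => (Zd A u x / ‖x‖) ^ 2 * muA A x)
          + sphInt n ρ (fun x => (u x) ^ 2)) := by
    change 2 * sphInt n ρ (fun x => (Zd A w x / ‖x‖) ^ 2 * muA A x)
      - sphInt n ρ (fun x => quadForm (A x) (gradient w x) (gradient w x))
      + sphInt n ρ (fun x => (w x) ^ 2)
      - c * sphInt n ρ (fun x => (w x) ^ 2 / ‖x‖ ^ 2 * muA A x) ≤ _
    have j1 : Integrable (fun x => 2 * ((Zd A w x / ‖x‖) ^ 2 * muA A x))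
        ((μH[(n : ℝ) - 1] : Measure (En n)).restrict (sphere 0 ρ)) := i1.const_mul 2
    have j2 : Integrable (fun x => 2 * ((Zd A w x / ‖x‖) ^ 2 * muA A x)
        - quadForm (A x) (gradient w x) (gradient w x))
        ((μH[(n : ℝ) - 1] : Measure (En n)).restrict (sphere 0 ρ)) := j1.sub i2
    have j3 : Integrable (fun x => 2 * ((Zd A w x / ‖x‖) ^ 2 * muA A x)
        - quadForm (A x) (gradient w x) (gradient w x) + w x ^ 2)
        ((μH[(n : ℝ) - 1] : Measure (En n)).restrict (sphere 0 ρ)) := j2.add i3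
    have j4 : Integrable (fun x => c * ((w x) ^ 2 / ‖x‖ ^ 2 * muA A x))
        ((μH[(n : ℝ) - 1] : Measure (En n)).restrict (sphere 0 ρ)) := i4.const_mul c
    unfold sphInt
    beta_reduce
    rw [← integral_const_mul, ← integral_const_mul, ← integral_sub j1 i2,
      ← integral_add j2 i3, ← integral_sub j3 j4,
      ← integral_add i5 i6, ← integral_const_mul]
    refine setIntegral_mono_on (j3.sub j4)
      ((i5.add i6).const_mul _) isClosed_sphere.measurableSet ?_
    intro x hxs
    have hx := hsub hxs
    have hxn : ‖x‖ = ρ := by simpa using hxs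
    have hμ0 : 0 < muA A x := lt_of_lt_of_le hlam0 (hμlow x hx)
    have hμ1 := hμup x hx
    have hq : quadForm (A x) x x = muA A x * ρ ^ 2 := by
      rw [muA, hxn]; field_simp
    -- Cauchy-Schwarz
    have hcs : (Zd A w x / ‖x‖) ^ 2 * muA A x ≤
        quadForm (A x) (gradient w x) (gradient w x) := by
      have h := quadForm_cs (A x) (hsym x hx)
        (fun ξ => le_trans (by positivity) (hell x hx ξ).1) x (gradient w x)
        (by rw [hq]; positivity)
      rw [Zd_eq_quad, hxn]
      rw [hq] at h
      have e : ((muA A x)⁻¹ * quadForm (A x) x (gradient w x) / ρ) ^ 2 * muA A x =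
          quadForm (A x) x (gradient w x) ^ 2 / (muA A x * ρ ^ 2) := by
        field_simp
      rw [e, div_le_iff₀ (by positivity)]
      linarith
    have hZw : Zd A w x = ρ ^ k * (Zd A u x + k * u x) := by
      rw [← hxn]
      exact Zd_mul_rpow A u k x (hne x hx) hμ0.ne'
        ((huc.differentiableOn one_ne_zero).differentiableAt ((isOpen_OmegaExt n).mem_nhds hx))
    have hwx : w x = ρ ^ k * u x := by rw [hw]; simp only [hxn]
    have hpow : ρ ^ ((n : ℝ) - 1) = (ρ ^ k) ^ 2 := by
      rw [← Real.rpow_natCast, ← Real.rpow_mul hρ0.le]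
      congr 1; rw [hk]; push_cast; ring
    rw [hpow]
    rw [hZw, hxn] at hcs
    rw [hZw, hwx, hxn]
    exact pointwise_alg _ _ _ _ ρ k c lam⁻¹ _ hρ1 hμ0 hμ1 hlami hcs
  have h := (hG ρ hρ).trans hGle
  have hpp : ρ ^ ((n : ℝ) - 1 - δ) = ρ ^ ((n : ℝ) - 1) * ρ ^ (-δ) := by
    rw [← Real.rpow_add hρ0]; congr 1
  rw [hpp] at h
  have hT : 0 < ρ ^ ((n : ℝ) - 1) := Real.rpow_pos_of_pos hρ0 _
  have h' : ρ ^ ((n : ℝ) - 1) * (C₂ * ρ ^ (-δ)) ≤ ρ ^ ((n : ℝ) - 1) * (K *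
      (sphInt n ρ (fun x => (Zd A u x / ‖x‖) ^ 2 * muA A x)
          + sphInt n ρ (fun x => (u x) ^ 2))) := by linarith
  have h'' := le_of_mul_le_mul_left h' hT
  rw [div_mul_eq_mul_div, div_le_iff₀ hKpos]
  linarith

end
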